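/- arXiv:2005.04334 — 4 statements merged into one kernel-verified Lean document; each statement's English description precedes it below -/
import Mathlib

section
/- Let A be a commutative ring, m a natural number, and M an m×m matrix over A. In the formal power series ring A[[t]], one has det(1 − t·M) · (Σ_{k≥1} tr(M^k)·t^k) = −t · D(det(1 − t·M)), where D denotes the formal derivative of power series. In other words, the generating series of traces of iterates of M is the negative logarithmic derivative of the reverse characteristic polynomial det(1 − t·M). -/
/-!
The identity is Jacobi's formula `D (det N) = tr (adj N * D N)` applied to `N = 1 - t • M`, for
which `D N = -M`. The inverse of `N` over `A⟦t⟧` is the geometric series `S = ∑ M ^ k t ^ k`, so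
`adj N = det N • S`, and hence `-t * D (det N) = det N * tr (S * (t • M))`. The last trace is
`∑_{k ≥ 1} tr (M ^ k) t ^ k`.
-/

open Matrix

lemma derivation_prod {R B ι : Type*} [CommRing R] [CommRing B] [Algebra R B] [DecidableEq ι]
    (D : Derivation R B B) (s : Finset ι) (f : ι → B) :
    D (∏ i ∈ s, f i) = ∑ i ∈ s, (∏ j ∈ s.erase i, f j) * D (f i) := by
  induction s using Finset.induction_on with
  | empty => simp
  | insert a s ha ih =>
    rw [Finset.prod_insert ha, Finset.sum_insert ha, Finset.erase_insert ha, D.leibniz, ih,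
      smul_eq_mul, smul_eq_mul, Finset.mul_sum, add_comm]
    congr 1
    refine Finset.sum_congr rfl fun i hi => ?_
    have hne : a ≠ i := fun h => ha (h ▸ hi)
    rw [Finset.erase_insert_of_ne hne, Finset.prod_insert (by simp [ha]), mul_assoc]

/-- Jacobi's formula for an arbitrary derivation `D`: by multilinearity `D (det N)` is the sum over
the columns of `N` of the determinants with that column differentiated, and Cramer's rule
identifies the sum with a trace. -/
lemma derivation_det_eq_trace_adjugate_mul {R B n : Type*} [CommRing R] [CommRing B] [Algebra R B]
    [Fintype n] [DecidableEq n] (D : Derivation R B B) (N : Matrix n n B) :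
    D N.det = trace (N.adjugate * N.map D) := by
  have hcol (i : n) : (N.adjugate * N.map D) i i = (N.updateCol i fun j => D (N j i)).det := by
    rw [← cramer_apply, cramer_eq_adjugate_mulVec]
    rfl
  simp only [trace, diag_apply, hcol, det_apply, map_sum]
  rw [Finset.sum_comm]
  refine Finset.sum_congr rfl fun σ _ => ?_
  rw [Units.smul_def, map_zsmul, derivation_prod, Finset.smul_sum]
  refine Finset.sum_congr rfl fun i _ => ?_
  rw [← Finset.mul_prod_erase Finset.univ _ (Finset.mem_univ i), updateCol_self, Units.smul_def,
    mul_comm]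
  congr 2
  refine Finset.prod_congr rfl fun j hj => ?_
  rw [updateCol_ne (Finset.ne_of_mem_erase hj)]

/-- The geometric series `∑ M ^ k t ^ k`, as a matrix of power series. -/
noncomputable def geomSeriesMatrix {A n : Type*} [CommRing A] [Fintype n] [DecidableEq n]
    (M : Matrix n n A) : Matrix n n (PowerSeries A) :=
  Matrix.of fun i j => PowerSeries.mk fun k => (M ^ k) i j

section

variable {A n : Type*} [CommRing A] [Fintype n] [DecidableEq n] (M : Matrix n n A)

lemma geomSeriesMatrix_mul_X_smul_apply (i j : n) :
    (geomSeriesMatrix M * (PowerSeries.X : PowerSeries A) • M.map PowerSeries.C) i j =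
      PowerSeries.mk fun k => if k = 0 then 0 else (M ^ k) i j := by
  rw [mul_smul_comm, Matrix.smul_apply, smul_eq_mul]
  ext k
  cases k with
  | zero => simp
  | succ k =>
    simp [PowerSeries.coeff_succ_X_mul, Matrix.mul_apply, geomSeriesMatrix, pow_succ]

lemma geomSeriesMatrix_mul_one_sub :
    geomSeriesMatrix M * (1 - (PowerSeries.X : PowerSeries A) • M.map PowerSeries.C) = 1 := by
  rw [mul_sub, mul_one]
  ext i j k
  rw [Matrix.sub_apply, geomSeriesMatrix_mul_X_smul_apply]
  by_cases hk : k = 0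
  · subst hk
    by_cases hij : i = j <;> simp [geomSeriesMatrix, Matrix.one_apply, hij]
  · by_cases hij : i = j <;>
      simp [geomSeriesMatrix, Matrix.one_apply, hij, hk, PowerSeries.coeff_one]

end

lemma map_derivative_one_sub_X_smul {A n : Type*} [CommRing A] [DecidableEq n]
    (M : Matrix n n A) :
    (1 - (PowerSeries.X : PowerSeries A) • M.map PowerSeries.C).map (PowerSeries.derivative A) =
      -M.map PowerSeries.C := by
  ext i j : 1
  have hC (a : A) : PowerSeries.derivative A (PowerSeries.C a) = 0 := PowerSeries.derivative_C
  by_cases hij : i = j <;>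
    simp [hij, hC, PowerSeries.derivative_X]

/-- For a commutative ring `A` and an `m × m` matrix `M` over `A`, the generating series
of traces of iterates of `M` is the negative logarithmic derivative of the reverse
characteristic polynomial `det (1 - t • M)`:
`det(1 − t·M) · (Σ_{k≥1} tr(M^k)·t^k) = −t · D(det(1 − t·M))` in `A⟦t⟧`. -/
theorem trace_series_eq_neg_log_deriv_charRev
    (A : Type*) [CommRing A] (m : ℕ) (M : Matrix (Fin m) (Fin m) A) :
    ((Matrix.det (1 - (Polynomial.X : Polynomial A) • M.map Polynomial.C) :
        Polynomial A) : PowerSeries A) *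
      PowerSeries.mk (fun k => if k = 0 then 0 else Matrix.trace (M ^ k)) =
    -(PowerSeries.X *
        PowerSeries.derivative A
          ((Matrix.det (1 - (Polynomial.X : Polynomial A) • M.map Polynomial.C) :
              Polynomial A) : PowerSeries A)) := by
  have hN : ((Matrix.det (1 - (Polynomial.X : Polynomial A) • M.map Polynomial.C) :
      Polynomial A) : PowerSeries A) =
      (1 - (PowerSeries.X : PowerSeries A) • M.map PowerSeries.C).det := by
    rw [← Polynomial.coeToPowerSeries.ringHom_apply, RingHom.map_det]
    congr 1
    ext i j : 1
    by_cases hij : i = j <;> simp [hij] <;> exact mul_comm _ _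
  have htr : PowerSeries.mk (fun k => if k = 0 then 0 else Matrix.trace (M ^ k)) =
      trace (geomSeriesMatrix M * (PowerSeries.X : PowerSeries A) • M.map PowerSeries.C) := by
    simp only [trace, diag_apply, geomSeriesMatrix_mul_X_smul_apply]
    ext k
    by_cases hk : k = 0 <;> simp [hk]
  have hadj : (1 - (PowerSeries.X : PowerSeries A) • M.map PowerSeries.C).adjugate =
      (1 - (PowerSeries.X : PowerSeries A) • M.map PowerSeries.C).det • geomSeriesMatrix M := by
    have h := congrArg (geomSeriesMatrix M * ·)
      (mul_adjugate (1 - (PowerSeries.X : PowerSeries A) • M.map PowerSeries.C))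
    simpa only [← mul_assoc, geomSeriesMatrix_mul_one_sub, one_mul, mul_smul_comm, mul_one] using h
  rw [hN, htr, derivation_det_eq_trace_adjugate_mul, map_derivative_one_sub_X_smul, hadj]
  simp only [smul_mul_assoc, mul_smul_comm, mul_neg, trace_smul, trace_neg, smul_eq_mul]
  ring
end

section
/- There exists a bijection T from the set of sequences of integers indexed by the positive natural numbers to itself such that for every sequence b : ℕ+ → ℤ and every positive integer n, Σ_{d ∣ n} d·(T b)(d)^{n/d} = Σ_{d ∣ n} d·b(d), where both sums range over the positive divisors d of n. (That is, the additive ghost coordinates of b agree with the Witt ghost coordinates of T b for all n.) -/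
/-!
For each integer `x` there are integers `M x m` (necklace numbers) with
`∑_{e ∣ m} e * M x e = x ^ m` for all `m > 0`.  Möbius inversion gives integers `N x m` with
`∑_{e ∣ m} N x e = x ^ m`, and `m ∣ N x m` (`dvd_neckSum`) follows by strong induction: if `p ^ k`
divides `m` exactly, the divisors of `m` other than those of `m / p` are multiples of `p ^ k`, so
`N x m ≡ x ^ m - x ^ (m / p) ≡ 0` modulo `p ^ k`.

Substituting this into the Witt ghost coordinate and collecting terms gives
`∑_{d ∣ n} d * a d ^ (n / d) = ∑_{k ∣ n} k * (∑_{d ∣ k} M (a d) (k / d))`, so the sequence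
`S a k = ∑_{d ∣ k} M (a d) (k / d)` has the Witt ghost coordinates of `a` as its additive ghost
coordinates.  As `M x 1 = x`, the map `S` is unitriangular, hence bijective, and `T` is its inverse.
-/

/-- Extend a sequence indexed by the positive naturals to all naturals, by zero at `0`. -/
def extZ (a : ℕ+ → ℤ) : ℕ → ℤ := fun d => if h : 0 < d then a ⟨d, h⟩ else 0

/-- `∑_{d ∣ m} μ(m / d) * x ^ d`, the number of aperiodic words of length `m` on `x` letters
when `x` is a natural number. -/
def neckSum (x : ℤ) (m : ℕ) : ℤ :=
  ∑ p ∈ m.divisorsAntidiagonal, (ArithmeticFunction.moebius p.1 : ℤ) * x ^ p.2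

lemma sum_neckSum (x : ℤ) {m : ℕ} (hm : 0 < m) : ∑ e ∈ m.divisors, neckSum x e = x ^ m :=
  (ArithmeticFunction.sum_eq_iff_sum_mul_moebius_eq (f := neckSum x) (g := fun n => x ^ n)).2
    (fun _ _ => by simp [neckSum]) m hm

/-- The Euler-type congruence `x ^ (p ^ (k + 1) * r) ≡ x ^ (p ^ k * r)` modulo `p ^ (k + 1)`. -/
lemma prime_pow_dvd_pow_sub_pow {p : ℕ} (hp : p.Prime) (k r : ℕ) (x : ℤ) :
    ((p ^ (k + 1) : ℕ) : ℤ) ∣ x ^ (p ^ (k + 1) * r) - x ^ (p ^ k * r) := by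
  have := Fact.mk hp
  have h : (p : ℤ) ∣ (x ^ r) ^ p - x ^ r := by
    rw [← ZMod.intCast_zmod_eq_zero_iff_dvd]
    push_cast
    rw [ZMod.pow_card, sub_self]
  have h2 := dvd_sub_pow_of_dvd_sub h k
  have e1 : x ^ (p ^ (k + 1) * r) = ((x ^ r) ^ p) ^ p ^ k := by
    rw [← pow_mul, ← pow_mul]
    congr 1
    ring
  have e2 : x ^ (p ^ k * r) = (x ^ r) ^ p ^ k := by rw [← pow_mul, mul_comm]
  rw [e1, e2]
  exact_mod_cast h2

lemma dvd_neckSum (x : ℤ) (m : ℕ) (hm : 0 < m) : (m : ℤ) ∣ neckSum x m := by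
  induction m using Nat.strong_induction_on with
  | _ m ih =>
  rw [Int.natCast_dvd, Nat.dvd_iff_prime_pow_dvd_dvd]
  intro p k hp hk
  rw [← Int.natCast_dvd]
  -- The congruence modulo the full power of `p` in `m` implies the one modulo `p ^ k`.
  obtain ⟨v, r, hr, hmr⟩ := Nat.exists_eq_pow_mul_and_not_dvd hm.ne' p hp.ne_one
  have hkv : k ≤ v := by
    rw [hmr] at hk
    have hc : Nat.Coprime (p ^ k) r := Nat.Coprime.pow_left _ ((hp.coprime_iff_not_dvd).2 hr)
    exact (Nat.pow_dvd_pow_iff_le_right hp.one_lt).1 (hc.dvd_of_dvd_mul_right hk)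
  refine (Int.natCast_dvd_natCast.2 (pow_dvd_pow p hkv)).trans ?_
  rcases v with _ | v
  · simp
  have hr0 : 0 < r := Nat.pos_of_ne_zero (by rintro rfl; simp at hr)
  have hm' : 0 < p ^ v * r := Nat.mul_pos (pow_pos hp.pos v) hr0
  have hsub : (p ^ v * r).divisors ⊆ m.divisors :=
    Nat.divisors_subset_of_dvd hm.ne' (by rw [hmr, pow_succ]; exact ⟨p, by ring⟩)
  have hmem : m ∈ m.divisors \ (p ^ v * r).divisors := by
    simp only [Finset.mem_sdiff, Nat.mem_divisors, not_and]
    refine ⟨⟨dvd_rfl, hm.ne'⟩, fun h => absurd (Nat.le_of_dvd hm' h) ?_⟩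
    rw [not_le, hmr, pow_succ]
    nlinarith [hp.two_le]
  have hsum := Finset.sum_sdiff (f := neckSum x) hsub
  rw [sum_neckSum x hm, sum_neckSum x hm', ← Finset.add_sum_erase _ _ hmem] at hsum
  have hrest : ((p ^ (v + 1) : ℕ) : ℤ) ∣
      ∑ e ∈ (m.divisors \ (p ^ v * r).divisors).erase m, neckSum x e := by
    refine Finset.dvd_sum fun e he => ?_
    simp only [Finset.mem_erase, Finset.mem_sdiff, Nat.mem_divisors, not_and] at he
    obtain ⟨hne, ⟨hem, -⟩, hnot⟩ := he
    have he0 : 0 < e := Nat.pos_of_dvd_of_pos hem hm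
    refine dvd_trans ?_ (ih e (lt_of_le_of_ne (Nat.le_of_dvd hm hem) hne) he0)
    rw [Int.natCast_dvd_natCast]
    obtain ⟨w, s, hs, hes⟩ := Nat.exists_eq_pow_mul_and_not_dvd he0.ne' p hp.ne_one
    have hsr : s ∣ r := by
      have hc : Nat.Coprime s (p ^ (v + 1)) :=
        (Nat.Coprime.pow_left _ ((hp.coprime_iff_not_dvd).2 hs)).symm
      exact hc.dvd_of_dvd_mul_left (hmr ▸ (Dvd.intro_left _ hes.symm).trans hem)
    have hw : v + 1 ≤ w := by
      by_contra hlt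
      refine hnot ?_ hm'.ne'
      rw [hes]
      exact mul_dvd_mul (pow_dvd_pow p (by omega)) hsr
    rw [hes]
    exact (pow_dvd_pow p hw).trans (dvd_mul_right _ _)
  have hpow := prime_pow_dvd_pow_sub_pow hp v r x
  rw [← hmr] at hpow
  have heq : neckSum x m = (x ^ m - x ^ (p ^ v * r)) -
      ∑ e ∈ (m.divisors \ (p ^ v * r).divisors).erase m, neckSum x e := by linarith
  rw [heq]
  exact dvd_sub hpow hrest

/-- The necklace number `(1 / m) * ∑_{d ∣ m} μ(m / d) * x ^ d`; the division is exact
by `dvd_neckSum`. -/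
def neck (x : ℤ) (m : ℕ) : ℤ := neckSum x m / m

lemma sum_mul_neck (x : ℤ) {m : ℕ} (hm : 0 < m) :
    ∑ e ∈ m.divisors, (e : ℤ) * neck x e = x ^ m := by
  rw [← sum_neckSum x hm]
  exact Finset.sum_congr rfl fun e he =>
    Int.mul_ediv_cancel' (dvd_neckSum x e (Nat.pos_of_mem_divisors he))

lemma neck_one (x : ℤ) : neck x 1 = x := by
  simpa using sum_mul_neck x one_pos

/-- The map from Witt coordinates to additive coordinates, `S a n = ∑_{d ∣ n} M (a d) (n / d)`
with `M` the necklace numbers. -/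
def wittToAdd (a : ℕ+ → ℤ) : ℕ+ → ℤ := fun n =>
  ∑ d ∈ (n : ℕ).divisors, neck (extZ a d) ((n : ℕ) / d)

lemma extZ_pos (a : ℕ+ → ℤ) {d : ℕ} (h : 0 < d) : extZ a d = a ⟨d, h⟩ := dif_pos h

lemma wittToAdd_eq (a : ℕ+ → ℤ) (n : ℕ+) : wittToAdd a n =
    (∑ d ∈ (n : ℕ).properDivisors, neck (extZ a d) ((n : ℕ) / d)) + a n := by
  rw [wittToAdd, ← Nat.cons_self_properDivisors n.ne_zero, Finset.sum_cons, Nat.div_self n.pos,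
    neck_one, extZ_pos a n.pos, add_comm]
  rfl

lemma ghost_wittToAdd (a : ℕ+ → ℤ) (n : ℕ+) :
    ∑ d ∈ (n : ℕ).divisors, (d : ℤ) * extZ a d ^ ((n : ℕ) / d) =
      ∑ d ∈ (n : ℕ).divisors, (d : ℤ) * extZ (wittToAdd a) d := by
  have h1 : ∀ d ∈ (n : ℕ).divisors, (d : ℤ) * extZ a d ^ ((n : ℕ) / d) =
      ∑ e ∈ ((n : ℕ) / d).divisors, ((d * e : ℕ) : ℤ) * neck (extZ a d) e := by
    intro d hd
    rw [← sum_mul_neck _ (Nat.div_pos (Nat.divisor_le hd) (Nat.pos_of_mem_divisors hd)),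
      Finset.mul_sum]
    exact Finset.sum_congr rfl fun e _ => by push_cast; ring
  have h2 : ∀ k ∈ (n : ℕ).divisors, (k : ℤ) * extZ (wittToAdd a) k =
      ∑ d ∈ k.divisors, (k : ℤ) * neck (extZ a d) (k / d) := by
    intro k hk
    rw [extZ_pos _ (Nat.pos_of_mem_divisors hk), ← Finset.mul_sum]
    rfl
  rw [Finset.sum_congr rfl h1, Finset.sum_congr rfl h2, Finset.sum_sigma', Finset.sum_sigma']
  refine Finset.sum_bij' (fun q _ => ⟨q.1 * q.2, q.1⟩) (fun q _ => ⟨q.2, q.1 / q.2⟩) ?_ ?_ ?_ ?_ ?_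
  · rintro ⟨d, e⟩ h
    simp only [Finset.mem_sigma, Nat.mem_divisors] at h ⊢
    obtain ⟨⟨hd, hn⟩, he, -⟩ := h
    have hde := Nat.mul_dvd_of_dvd_div hd he
    exact ⟨⟨hde, hn⟩, dvd_mul_right _ _, ne_zero_of_dvd_ne_zero hn hde⟩
  · rintro ⟨k, d⟩ h
    simp only [Finset.mem_sigma, Nat.mem_divisors] at h ⊢
    obtain ⟨⟨hk, hn⟩, hd, -⟩ := h
    exact ⟨⟨hd.trans hk, hn⟩, Nat.div_dvd_div hd hk,
      (Nat.div_pos (Nat.le_of_dvd n.pos (hd.trans hk))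
        (Nat.pos_of_dvd_of_pos (hd.trans hk) n.pos)).ne'⟩
  · rintro ⟨d, e⟩ h
    simp only [Finset.mem_sigma] at h
    simp [Nat.mul_div_cancel_left _ (Nat.pos_of_mem_divisors h.1)]
  · rintro ⟨k, d⟩ h
    simp only [Finset.mem_sigma] at h
    simp [Nat.mul_div_cancel' (Nat.dvd_of_mem_divisors h.2)]
  · rintro ⟨d, e⟩ h
    simp only [Finset.mem_sigma] at h
    simp [Nat.mul_div_cancel_left _ (Nat.pos_of_mem_divisors h.1)]

/-- The inverse of `wittToAdd`, extended to index `0`, by solving the unitriangular system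
recursively along proper divisors. -/
def addToWitt (b : ℕ → ℤ) (n : ℕ) : ℤ :=
  b n - ∑ d ∈ n.properDivisors.attach, neck (addToWitt b d.1) (n / d.1)
termination_by n
decreasing_by exact (Nat.mem_properDivisors.1 d.2).2

lemma wittToAdd_bijective : Function.Bijective wittToAdd := by
  constructor
  · intro a a' h
    have key : ∀ m : ℕ, extZ a m = extZ a' m := by
      intro m
      induction m using Nat.strong_induction_on with
      | _ m ih =>
      rcases Nat.eq_zero_or_pos m with rfl | hm
      · simp [extZ]
      have hS := (wittToAdd_eq a ⟨m, hm⟩).symm.trans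
        ((congrFun h ⟨m, hm⟩).trans (wittToAdd_eq a' ⟨m, hm⟩))
      rw [Finset.sum_congr rfl fun d hd => by
        rw [ih d (Nat.mem_properDivisors.1 hd).2]] at hS
      rw [extZ_pos a hm, extZ_pos a' hm]
      exact add_left_cancel hS
    funext n
    have := key n
    rwa [extZ_pos a n.pos, extZ_pos a' n.pos] at this
  · intro b
    refine ⟨fun n => addToWitt (extZ b) n, funext fun n => ?_⟩
    have hs : ∑ d ∈ (n : ℕ).properDivisors,
        neck (extZ (fun n : ℕ+ => addToWitt (extZ b) n) d) ((n : ℕ) / d) =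
        ∑ d ∈ (n : ℕ).properDivisors, neck (addToWitt (extZ b) d) ((n : ℕ) / d) :=
      Finset.sum_congr rfl fun d hd => by
        rw [extZ_pos _ (Nat.pos_of_mem_properDivisors hd)]
        rfl
    rw [wittToAdd_eq, hs, addToWitt, extZ_pos b n.pos,
      Finset.sum_attach _ (fun d => neck (addToWitt (extZ b) d) ((n : ℕ) / d))]
    exact add_sub_cancel _ _

/-- There is a bijection `T` on integer sequences indexed by `ℕ+` such that for every
sequence `b` and every positive integer `n`, the `n`-th Witt ghost coordinate of `T b`
equals the `n`-th additive ghost coordinate of `b`: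
`Σ_{d ∣ n} d·(T b)(d)^(n/d) = Σ_{d ∣ n} d·b(d)`. -/
theorem exists_bijection_additive_to_witt_ghost :
    ∃ T : (ℕ+ → ℤ) → (ℕ+ → ℤ), Function.Bijective T ∧
      ∀ (b : ℕ+ → ℤ) (n : ℕ+),
        ∑ d ∈ (n : ℕ).divisors, (d : ℤ) * (extZ (T b) d) ^ ((n : ℕ) / d)
          = ∑ d ∈ (n : ℕ).divisors, (d : ℤ) * extZ b d := by
  let E := Equiv.ofBijective wittToAdd wittToAdd_bijective
  refine ⟨E.symm, E.symm.bijective, fun b n => ?_⟩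
  rw [ghost_wittToAdd]
  have h : wittToAdd (E.symm b) = b := E.apply_symm_apply b
  rw [h]
end

section
/- For every sequence b : ℕ+ → ℤ there exists a sequence a : ℕ+ → ℤ such that for every positive integer n, Σ_{d ∣ n} d·a(d)^{n/d} = Σ_{d ∣ n} d·b(d). (Integrality of the change of coordinates: the sequence a, which is determined recursively by this system of equations with a priori only rational entries, in fact has integer entries.) -/
/-- Euler's congruence `x ^ (p ^ (e + 1) * c) ≡ x ^ (p ^ e * c)` modulo `p ^ (e + 1)`. -/
lemma pow_succ_dvd_pow_sub_pow {p e m : ℕ} (hp : p.Prime) (h : p ^ e ∣ m) (x : ℤ) :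
    (p : ℤ) ^ (e + 1) ∣ x ^ (p * m) - x ^ m := by
  obtain ⟨c, rfl⟩ := h
  have := Fact.mk hp
  have h1 : (p : ℤ) ∣ (x ^ c) ^ p - x ^ c := by
    rw [← ZMod.intCast_zmod_eq_zero_iff_dvd]
    push_cast
    rw [ZMod.pow_card, sub_self]
  have h2 := dvd_sub_pow_of_dvd_sub h1 e
  have e1 : x ^ (p * (p ^ e * c)) = ((x ^ c) ^ p) ^ p ^ e := by
    rw [← pow_mul, ← pow_mul]; congr 1; ring
  have e2 : x ^ (p ^ e * c) = (x ^ c) ^ p ^ e := by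
    rw [← pow_mul]; congr 1; ring
  rw [e1, e2]
  exact h2

lemma pow_dvd_mul_pow_sub_pow {p k d m : ℕ} (hp : p.Prime) (h : p ^ k ∣ d * (p * m)) (x : ℤ) :
    (p : ℤ) ^ k ∣ (d : ℤ) * (x ^ (p * m) - x ^ m) := by
  -- Split `p ^ k = p ^ i * p ^ j` with `p ^ i ∣ d` and `p ^ j ∣ p * m`.
  obtain ⟨y, z, hy, hz, hyz⟩ := Nat.dvd_mul.1 h
  obtain ⟨j, -, rfl⟩ := (Nat.dvd_prime_pow hp).1 (hyz ▸ Dvd.intro_left y rfl)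
  have hk : (p : ℤ) ^ k = (y : ℤ) * (p : ℤ) ^ j := by exact_mod_cast hyz.symm
  rw [hk]
  refine mul_dvd_mul (by exact_mod_cast hy) ?_
  cases j with
  | zero => simp
  | succ e =>
    refine pow_succ_dvd_pow_sub_pow hp ?_ x
    rw [pow_succ'] at hz
    exact Nat.dvd_of_mul_dvd_mul_left hp.pos hz

lemma pow_dvd_of_not_dvd_div {p k n d : ℕ} (hp : p.Prime) (hk : p ^ k ∣ n) (hd : d ∣ n)
    (h : ¬ d ∣ n / p) : p ^ k ∣ d := by
  obtain ⟨e, rfl⟩ := hd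
  refine Nat.Coprime.dvd_of_dvd_mul_right (Nat.Coprime.pow_left k ?_) hk
  rw [hp.coprime_iff_not_dvd]
  rintro ⟨c, rfl⟩
  apply h
  rw [show d * (p * c) = p * (d * c) by ring, Nat.mul_div_cancel_left _ hp.pos]
  exact Dvd.intro _ rfl

/-- The inductive step: if the ghost coordinates of `a` and `b` agree below `n`, then the
equation at `n` can be solved for `a n` in the integers. -/
lemma dvd_defect (a b : ℕ → ℤ) {n : ℕ} (hn : 0 < n)
    (ih : ∀ m < n, 0 < m →
      ∑ d ∈ m.divisors, (d : ℤ) * a d ^ (m / d) = ∑ d ∈ m.divisors, (d : ℤ) * b d) :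
    (n : ℤ) ∣ ∑ d ∈ n.divisors, (d : ℤ) * b d
      - ∑ d ∈ n.properDivisors, (d : ℤ) * a d ^ (n / d) := by
  rw [Int.natCast_dvd, Nat.dvd_iff_prime_pow_dvd_dvd]
  intro p k hp hk
  rw [← Int.natCast_dvd]
  push_cast
  rcases Nat.eq_zero_or_pos k with rfl | hk0
  · simp
  obtain ⟨m, rfl⟩ : p ∣ n := (dvd_pow_self p hk0.ne').trans hk
  have hm : 0 < m := Nat.pos_of_mul_pos_left hn
  have hmn : m < p * m := lt_mul_of_one_lt_left hm hp.one_lt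
  have hdiv : p * m / p = m := Nat.mul_div_cancel_left _ hp.pos
  have hlarge : ∀ d, d ∣ p * m → d ∉ m.divisors → (p : ℤ) ^ k ∣ (d : ℤ) := by
    intro d hd hdm
    have := pow_dvd_of_not_dvd_div hp hk hd (by
      rw [hdiv]; exact fun h => hdm (Nat.mem_divisors.2 ⟨h, hm.ne'⟩))
    exact_mod_cast this
  have hsub : m.divisors ⊆ (p * m).properDivisors := by
    intro d hd
    have := Nat.dvd_of_mem_divisors hd
    exact Nat.mem_properDivisors.2
      ⟨this.mul_left p, (Nat.le_of_dvd hm this).trans_lt hmn⟩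
  have hB : (p : ℤ) ^ k ∣ ∑ d ∈ (p * m).divisors, (d : ℤ) * b d
      - ∑ d ∈ m.divisors, (d : ℤ) * b d := by
    rw [← Finset.sum_sdiff (hsub.trans Nat.properDivisors_subset_divisors), add_sub_cancel_right]
    refine Finset.dvd_sum fun d hd => Dvd.dvd.mul_right ?_ _
    rw [Finset.mem_sdiff] at hd
    exact hlarge d (Nat.dvd_of_mem_divisors hd.1) hd.2
  have hA : (p : ℤ) ^ k ∣ ∑ d ∈ (p * m).properDivisors, (d : ℤ) * a d ^ (p * m / d)
      - ∑ d ∈ m.divisors, (d : ℤ) * a d ^ (m / d) := by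
    rw [← Finset.sum_sdiff hsub, add_sub_assoc, ← Finset.sum_sub_distrib]
    refine dvd_add (Finset.dvd_sum fun d hd => Dvd.dvd.mul_right ?_ _)
      (Finset.dvd_sum fun d hd => ?_)
    · rw [Finset.mem_sdiff] at hd
      exact hlarge d (Nat.mem_properDivisors.1 hd.1).1 hd.2
    · have hdm := Nat.dvd_of_mem_divisors hd
      rw [← mul_sub, Nat.mul_div_assoc p hdm]
      refine pow_dvd_mul_pow_sub_pow hp ?_ _
      rwa [mul_left_comm, Nat.mul_div_cancel' hdm]
  rw [ih m hmn hm] at hA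
  simpa using dvd_sub hB hA

/-- The solution of the system, obtained by solving the `n`-th equation for the `n`-th term.
The integer division is exact for `n > 0` by `dvd_defect`. -/
def wittSolution (b : ℕ → ℤ) (n : ℕ) : ℤ :=
  (∑ d ∈ n.divisors, (d : ℤ) * b d
    - ∑ d ∈ n.properDivisors.attach, (d.1 : ℤ) * wittSolution b d.1 ^ (n / d.1)) / n
termination_by n
decreasing_by exact (Nat.mem_properDivisors.1 d.2).2

lemma wittSolution_spec (b : ℕ → ℤ) (n : ℕ) (hn : 0 < n) :
    ∑ d ∈ n.divisors, (d : ℤ) * wittSolution b d ^ (n / d)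
      = ∑ d ∈ n.divisors, (d : ℤ) * b d := by
  induction n using Nat.strong_induction_on with
  | _ n ih =>
    have hdvd := dvd_defect (wittSolution b) b hn ih
    have hrec := wittSolution.eq_1 b n
    rw [Finset.sum_attach n.properDivisors
      (fun d => (d : ℤ) * wittSolution b d ^ (n / d))] at hrec
    have hmul := Int.mul_ediv_cancel' hdvd
    rw [← hrec] at hmul
    rw [← Nat.cons_self_properDivisors hn.ne', Finset.sum_cons, Nat.div_self hn, pow_one, hmul,
      Nat.cons_self_properDivisors hn.ne']
    ring

/-- For every integer sequence `b : ℕ+ → ℤ` there is an integer sequence `a : ℕ+ → ℤ`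
whose Witt ghost coordinates equal the additive ghost coordinates of `b`:
`Σ_{d ∣ n} d·a(d)^(n/d) = Σ_{d ∣ n} d·b(d)` for all positive integers `n`. -/
theorem exists_witt_seq_matching_additive_ghost (b : ℕ+ → ℤ) :
    ∃ a : ℕ+ → ℤ, ∀ n : ℕ+,
      ∑ d ∈ (n : ℕ).divisors, (d : ℤ) * (extZ a d) ^ ((n : ℕ) / d)
        = ∑ d ∈ (n : ℕ).divisors, (d : ℤ) * extZ b d := by
  refine ⟨fun d => wittSolution (extZ b) d, fun n => ?_⟩
  rw [← wittSolution_spec (extZ b) n n.pos]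
  refine Finset.sum_congr rfl fun d hd => ?_
  simp [extZ, Nat.pos_of_mem_divisors hd]
end

section
/- For every sequence a : ℕ+ → ℤ there exists a sequence b : ℕ+ → ℤ such that for every positive integer n, Σ_{d ∣ n} d·b(d) = Σ_{d ∣ n} d·a(d)^{n/d}. (Surjectivity of the change of coordinates from additive ghost coordinates to Witt ghost coordinates over the integers.) -/
/-- The `n`-th Witt ghost coordinate of a sequence `a` indexed by `ℕ`. -/
def wittGhost (a : ℕ → ℤ) (n : ℕ) : ℤ := ∑ d ∈ n.divisors, (d : ℤ) * a d ^ (n / d)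

lemma prime_dvd_pow_sub_self {p : ℕ} (hp : p.Prime) (x : ℤ) : (p : ℤ) ∣ x ^ p - x := by
  have := Fact.mk hp
  rw [← ZMod.intCast_zmod_eq_zero_iff_dvd]
  simp

/-- If `p ^ j` is the `p`-part of `e`, then `p ^ (j + 1) ∣ x ^ (p * e) - x ^ e` for every `x`; so
this factor makes up for replacing `p * e` in the hypothesis by the difference of powers. -/
lemma prime_pow_dvd_mul_pow_sub {p : ℕ} (hp : p.Prime) {k d e : ℕ} (he : e ≠ 0)
    (h : p ^ k ∣ d * (p * e)) (x : ℤ) :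
    ((p ^ k : ℕ) : ℤ) ∣ (d : ℤ) * (x ^ (p * e) - x ^ e) := by
  obtain ⟨j, m, hm, rfl⟩ := Nat.exists_eq_pow_mul_and_not_dvd he p hp.ne_one
  have h1 : p ^ k ∣ d * p ^ (j + 1) := by
    have hc : Nat.Coprime (p ^ k) m := Nat.Coprime.pow_left _ ((hp.coprime_iff_not_dvd).2 hm)
    apply hc.dvd_of_dvd_mul_right
    convert h using 1
    ring
  have h2 : (p : ℤ) ^ (j + 1) ∣ x ^ (p * (p ^ j * m)) - x ^ (p ^ j * m) := by
    have := dvd_sub_pow_of_dvd_sub (prime_dvd_pow_sub_self hp (x ^ m)) j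
    rw [← pow_mul, ← pow_mul, ← pow_mul] at this
    rwa [show p * (p ^ j * m) = m * (p * p ^ j) by ring, mul_comm (p ^ j) m]
  refine (Int.natCast_dvd_natCast.2 h1).trans ?_
  push_cast
  exact mul_dvd_mul_left _ h2

lemma prime_pow_dvd_of_not_dvd {p : ℕ} (hp : p.Prime) {k d N : ℕ} (hk : p ^ k ∣ p * N)
    (hd : d ∣ p * N) (hdN : ¬ d ∣ N) : p ^ k ∣ d := by
  obtain ⟨e, he⟩ := hd
  have hpe : ¬ p ∣ e := by
    rintro ⟨f, rfl⟩
    apply hdN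
    refine ⟨f, Nat.eq_of_mul_eq_mul_left hp.pos ?_⟩
    rw [he]; ring
  have hc : Nat.Coprime (p ^ k) e := Nat.Coprime.pow_left _ ((hp.coprime_iff_not_dvd).2 hpe)
  exact hc.dvd_of_dvd_mul_right (he ▸ hk)

lemma sum_divisors_mul {p N : ℕ} (hp : p.Prime) (hN : N ≠ 0) (f : ℕ → ℤ) :
    ∑ d ∈ (p * N).divisors, f d
      = ∑ d ∈ (p * N).divisors \ N.divisors, f d + ∑ d ∈ N.divisors, f d :=
  (Finset.sum_sdiff (Nat.divisors_subset_of_dvd (mul_ne_zero hp.ne_zero hN)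
    (dvd_mul_left N p))).symm

lemma dvd_wittGhost_sub {p : ℕ} (hp : p.Prime) {k N : ℕ} (hN : N ≠ 0) (hk : p ^ k ∣ p * N)
    (a : ℕ → ℤ) : ((p ^ k : ℕ) : ℤ) ∣ wittGhost a (p * N) - wittGhost a N := by
  unfold wittGhost
  rw [sum_divisors_mul hp hN, add_sub_assoc, ← Finset.sum_sub_distrib]
  apply dvd_add
  · refine Finset.dvd_sum fun d hd => ?_
    simp only [Finset.mem_sdiff, Nat.mem_divisors, not_and_or, not_not] at hd
    exact (Int.natCast_dvd_natCast.2 (prime_pow_dvd_of_not_dvd hp hk hd.1.1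
      (hd.2.resolve_right hN))).mul_right _
  · refine Finset.dvd_sum fun d hd => ?_
    obtain ⟨e, rfl⟩ := (Nat.mem_divisors.1 hd).1
    have hd0 : 0 < d := Nat.pos_of_ne_zero (left_ne_zero_of_mul hN)
    rw [← mul_sub, Nat.mul_div_cancel_left _ hd0, mul_left_comm, Nat.mul_div_cancel_left _ hd0]
    exact prime_pow_dvd_mul_pow_sub hp (right_ne_zero_of_mul hN) (mul_left_comm p d e ▸ hk) _

/-- Dwork's lemma for the additive ghost map: the Möbius inverse `h` of the Witt ghost coordinates
satisfies `n ∣ h n`. -/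
lemma dvd_of_sum_divisors_eq_wittGhost {a h : ℕ → ℤ}
    (hh : ∀ n > 0, ∑ d ∈ n.divisors, h d = wittGhost a n) (n : ℕ) (hn : 0 < n) :
    (n : ℤ) ∣ h n := by
  induction n using Nat.strong_induction_on with
  | _ n ih =>
  rw [Int.natCast_dvd, Nat.dvd_iff_prime_pow_dvd_dvd]
  intro p k hp hk
  rw [← Int.natCast_dvd]
  rcases Nat.eq_zero_or_pos k with rfl | hk0
  · simp
  obtain ⟨N, rfl⟩ := (dvd_pow_self p hk0.ne').trans hk
  have hN : 0 < N := Nat.pos_of_mul_pos_left hn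
  have hw := dvd_wittGhost_sub hp hN.ne' hk a
  rw [← hh _ hn, ← hh _ hN, sum_divisors_mul hp hN.ne', add_sub_cancel_right] at hw
  have hmem : p * N ∈ (p * N).divisors \ N.divisors := by
    simp only [Finset.mem_sdiff, Nat.mem_divisors]
    refine ⟨⟨dvd_rfl, hn.ne'⟩, fun hc => ?_⟩
    have := Nat.le_of_dvd hN hc.1
    nlinarith [hp.two_le]
  rw [← Finset.add_sum_erase _ _ hmem] at hw
  refine (dvd_add_left (Finset.dvd_sum fun d hd => ?_)).1 hw
  simp only [Finset.mem_erase, Finset.mem_sdiff, Nat.mem_divisors, not_and_or, not_not] at hd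
  obtain ⟨hne, ⟨hd, -⟩, hdN⟩ := hd
  exact (Int.natCast_dvd_natCast.2 (prime_pow_dvd_of_not_dvd hp hk hd
    (hdN.resolve_right hN.ne'))).trans
    (ih d (lt_of_le_of_ne (Nat.le_of_dvd hn hd) hne) (Nat.pos_of_dvd_of_pos hd hn))

/-- For every integer sequence `a : ℕ+ → ℤ` there is an integer sequence `b : ℕ+ → ℤ`
whose additive ghost coordinates equal the Witt ghost coordinates of `a`:
`Σ_{d ∣ n} d·b(d) = Σ_{d ∣ n} d·a(d)^(n/d)` for all positive integers `n`. -/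
theorem exists_additive_seq_matching_witt_ghost (a : ℕ+ → ℤ) :
    ∃ b : ℕ+ → ℤ, ∀ n : ℕ+,
      ∑ d ∈ (n : ℕ).divisors, (d : ℤ) * extZ b d
        = ∑ d ∈ (n : ℕ).divisors, (d : ℤ) * (extZ a d) ^ ((n : ℕ) / d) := by
  obtain ⟨h, hh⟩ : ∃ h : ℕ → ℤ,
      ∀ n > 0, ∑ d ∈ n.divisors, h d = wittGhost (extZ a) n :=
    ⟨_, ArithmeticFunction.sum_eq_iff_sum_mul_moebius_eq.2 fun _ _ => rfl⟩
  refine ⟨fun n => h n / n, fun n => (Finset.sum_congr rfl fun d hd => ?_).trans (hh n n.pos)⟩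
  have hd0 : 0 < d := Nat.pos_of_mem_divisors hd
  simp only [extZ, hd0, dite_true]
  exact Int.mul_ediv_cancel' (dvd_of_sum_divisors_eq_wittGhost hh d hd0)
end
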